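/- Every finite-dimensional Leibniz algebra A over a field F of dimension d ≥ 2 satisfies l(A) ≤ d. -/

import Mathlib

/-!
Framework: length of finite-dimensional not necessarily associative,
not necessarily unital algebras (non-unital convention: `L_0(S) = 0`).
The multiplication of the algebra is passed explicitly as a binary
operation `μ`, so that the same definitions apply to an algebra, to its
commutator algebra, to a Lie bracket, etc.
-/

open Submodule Module

/-- `IsWord μ S k w`: `w` is a product of `k` elements of `S` (with respect to the
multiplication `μ`) with some placement of parentheses. -/
inductive IsWord {A : Type*} (μ : A → A → A) (S : Set A) : ℕ → A → Prop
  | base {a : A} (ha : a ∈ S) : IsWord μ S 1 a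
  | mul {m n : ℕ} {a b : A} (ha : IsWord μ S m a) (hb : IsWord μ S n b) :
      IsWord μ S (m + n) (μ a b)

/-- The multiplication of an algebra, as a plain binary operation. -/
def amul (A : Type*) [Mul A] : A → A → A := fun a b => a * b

section
variable (F : Type*) {A : Type*} [Field F] [AddCommGroup A] [Module F A]

/-- `L_i(S)`: the linear span of all words in `S` of length at most `i`
(non-unital convention, so `L_0(S) = 0`). -/
def Lset (μ : A → A → A) (S : Set A) (i : ℕ) : Submodule F A :=
  Submodule.span F {a | ∃ k, k ≤ i ∧ IsWord μ S k a}

/-- `S` generates the algebra, i.e. the span of all words in `S` is everything. -/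
def Generates (μ : A → A → A) (S : Set A) : Prop :=
  Submodule.span F {a | ∃ k, IsWord μ S k a} = ⊤

/-- `l(S)`: the length of a generating set `S`, the least `k` with `L_k(S) = A`. -/
noncomputable def lenSet (μ : A → A → A) (S : Set A) : ℕ :=
  sInf {k | Lset F μ S k = ⊤}

/-- An irreducible word of length `k` in `S`. -/
def IrredWord (μ : A → A → A) (S : Set A) (k : ℕ) (w : A) : Prop :=
  IsWord μ S k w ∧ ∀ m, m < k → w ∉ Lset F μ S m

end

section
variable {A : Type*}

/-- The set `P(x,y,z)` of monomials. -/
def Pset (μ : A → A → A) (x y z : A) : Set A :=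
  {μ (μ x z) y, μ (μ z x) y, μ (μ y z) x, μ (μ z y) x,
   μ x (μ z y), μ x (μ y z), μ y (μ x z), μ y (μ z x),
   μ x y, μ y x, μ x z, μ z x, μ y z, μ z y, x, y, z}

/-- The set `Q_l(x,y,z)` of monomials. -/
def Qlset (μ : A → A → A) (x y z : A) : Set A :=
  {μ x (μ z y), μ x (μ y z), μ y (μ x z), μ y (μ z x),
   μ x y, μ y x, μ x z, μ z x, μ y z, μ z y, x, y, z}

/-- The set `Q_r(x,y,z)` of monomials. -/
def Qrset (μ : A → A → A) (x y z : A) : Set A :=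
  {μ (μ x z) y, μ (μ z x) y, μ (μ y z) x, μ (μ z y) x,
   μ x y, μ y x, μ x z, μ z x, μ y z, μ z y, x, y, z}

end

section
variable (F : Type*) {A : Type*} [Field F] [AddCommGroup A] [Module F A]

/-- A mixing algebra: `(xy)z` and `z(xy)` lie in the span of `P(x,y,z)`. -/
def IsMixing (μ : A → A → A) : Prop :=
  ∀ x y z : A, μ (μ x y) z ∈ Submodule.span F (Pset μ x y z) ∧
    μ z (μ x y) ∈ Submodule.span F (Pset μ x y z)

/-- A sliding algebra: either `z(xy)` always lies in the span of `Q_r(x,y,z)`, or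
`(xy)z` always lies in the span of `Q_l(x,y,z)`. -/
def IsSliding (μ : A → A → A) : Prop :=
  (∀ x y z : A, μ z (μ x y) ∈ Submodule.span F (Qrset μ x y z)) ∨
  (∀ x y z : A, μ (μ x y) z ∈ Submodule.span F (Qlset μ x y z))

end

/-!
The Leibniz identity, rewritten as `x(ab) = (xa)b - (xb)a`, shows that the elements whose right
multiplication preserves a given subspace are closed under products. So a subspace that contains
a generating set `S` and is stable under right multiplication by `S` contains every word in `S`.
If `L_k(S) = L_{k+1}(S)`, then `L_k(S)` is such a subspace, hence everything. The chain
`L_0(S) ⊆ L_1(S) ⊆ ⋯` therefore gains a dimension at each step until it reaches `A`, which happens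
after at most `dim A` steps.
-/

theorem eq_top_or_le_finrank_of_stationary {K V : Type*} [DivisionRing K] [AddCommGroup V]
    [Module K V] [FiniteDimensional K V] {f : ℕ → Submodule K V} (hmono : Monotone f)
    (hstat : ∀ k, f k = f (k + 1) → f k = ⊤) (k : ℕ) : f k = ⊤ ∨ k ≤ finrank K (f k) := by
  induction k with
  | zero => exact .inr (Nat.zero_le _)
  | succ k ih =>
    rcases (hmono k.le_succ).eq_or_lt with heq | hlt
    · exact .inl (heq.symm.trans (hstat k heq))
    · have hk : k ≤ finrank K (f k) := ih.resolve_left hlt.ne_top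
      exact .inr (hk.trans_lt (finrank_lt_finrank_of_lt hlt))

theorem eq_top_at_finrank_of_stationary {K V : Type*} [DivisionRing K] [AddCommGroup V]
    [Module K V] [FiniteDimensional K V] {f : ℕ → Submodule K V} (hmono : Monotone f)
    (hstat : ∀ k, f k = f (k + 1) → f k = ⊤) : f (finrank K V) = ⊤ :=
  (eq_top_or_le_finrank_of_stationary hmono hstat _).elim id fun h =>
    eq_top_of_finrank_eq (le_antisymm (finrank_le _) h)

section Lset

variable {F A : Type*} [Field F]

theorem Lset_mono [AddCommGroup A] [Module F A] (μ : A → A → A) (S : Set A) :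
    Monotone (Lset F μ S) := fun _ _ hij =>
  span_mono fun _ ⟨k, hk, hw⟩ => ⟨k, hk.trans hij, hw⟩

theorem IsWord.mem_Lset [AddCommGroup A] [Module F A] {μ : A → A → A} {S : Set A} {k i : ℕ}
    {w : A} (hw : IsWord μ S k w) (hk : k ≤ i) : w ∈ Lset F μ S i :=
  subset_span ⟨k, hk, hw⟩

theorem IsWord.mul_mem_Lset [NonUnitalNonAssocRing A] [Module F A] [IsScalarTower F A A]
    {S : Set A} {n i : ℕ} {w x : A} (hw : IsWord (amul A) S n w) (hx : x ∈ Lset F (amul A) S i) :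
    x * w ∈ Lset F (amul A) S (i + n) := by
  suffices h : Lset F (amul A) S i ≤ (Lset F (amul A) S (i + n)).comap (LinearMap.mulRight F w)
    from h hx
  exact span_le.2 fun _ ⟨_, hm, hv⟩ => (hv.mul hw).mem_Lset (Nat.add_le_add_right hm n)

end Lset

/-- The (right) Leibniz identity, which makes right multiplications derivations. -/
def IsLeibniz (A : Type*) [Mul A] [Add A] : Prop :=
  ∀ x y z : A, (x * y) * z = x * (y * z) + (x * z) * y

section Leibniz

variable {A σ : Type*} [NonUnitalNonAssocRing A] [SetLike σ A] [AddSubgroupClass σ A]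

theorem IsLeibniz.mul_mul_mem (hA : IsLeibniz A) {V : σ} {a b : A} (ha : ∀ x ∈ V, x * a ∈ V)
    (hb : ∀ x ∈ V, x * b ∈ V) : ∀ x ∈ V, x * (a * b) ∈ V := by
  intro x hx
  have hsub : x * (a * b) = (x * a) * b - (x * b) * a := eq_sub_of_add_eq (hA x a b).symm
  rw [hsub]
  exact sub_mem (hb _ (ha x hx)) (ha _ (hb x hx))

theorem IsWord.mul_mem_of_isLeibniz (hA : IsLeibniz A) {S : Set A} {V : σ}
    (hV : ∀ s ∈ S, ∀ x ∈ V, x * s ∈ V) {n : ℕ} {w : A} (hw : IsWord (amul A) S n w) :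
    ∀ x ∈ V, x * w ∈ V := by
  induction hw with
  | base hs => exact hV _ hs
  | mul _ _ iha ihb => exact hA.mul_mul_mem iha ihb

theorem IsWord.mem_of_isLeibniz (hA : IsLeibniz A) {S : Set A} {V : σ} (hSV : ∀ s ∈ S, s ∈ V)
    (hV : ∀ s ∈ S, ∀ x ∈ V, x * s ∈ V) {n : ℕ} {w : A} (hw : IsWord (amul A) S n w) :
    w ∈ V := by
  induction hw with
  | base hs => exact hSV _ hs
  | mul _ hb iha _ => exact hb.mul_mem_of_isLeibniz hA hV _ iha

end Leibniz

namespace Generates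

variable {F A : Type*} [Field F] [NonUnitalNonAssocRing A] [Module F A] {S : Set A}

theorem eq_top_of_mul_right_mem (hS : Generates F (amul A) S) (hA : IsLeibniz A)
    {V : Submodule F A} (hSV : ∀ s ∈ S, s ∈ V) (hV : ∀ s ∈ S, ∀ x ∈ V, x * s ∈ V) : V = ⊤ := by
  rw [eq_top_iff, ← hS, span_le]
  exact fun _ ⟨_, hw⟩ => hw.mem_of_isLeibniz hA hSV hV

variable [IsScalarTower F A A]

theorem Lset_eq_top_of_eq_succ (hS : Generates F (amul A) S) (hA : IsLeibniz A) {k : ℕ}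
    (hk : Lset F (amul A) S k = Lset F (amul A) S (k + 1)) : Lset F (amul A) S k = ⊤ := by
  apply hS.eq_top_of_mul_right_mem hA
  · intro s hs
    rw [hk]
    exact (IsWord.base hs).mem_Lset (Nat.le_add_left 1 k)
  · intro s hs x hx
    rw [hk]
    exact (IsWord.base hs).mul_mem_Lset hx

theorem Lset_finrank_eq_top [FiniteDimensional F A] (hS : Generates F (amul A) S)
    (hA : IsLeibniz A) : Lset F (amul A) S (finrank F A) = ⊤ :=
  eq_top_at_finrank_of_stationary (Lset_mono (amul A) S) fun _ => hS.Lset_eq_top_of_eq_succ hA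

end Generates

theorem leibniz_length_le_dim_general {F A : Type*} [Field F] [NonUnitalNonAssocRing A]
    [Module F A] [IsScalarTower F A A] [FiniteDimensional F A] (hA : IsLeibniz A) {S : Set A}
    (hS : Generates F (amul A) S) : lenSet F (amul A) S ≤ finrank F A :=
  Nat.sInf_le (hS.Lset_finrank_eq_top hA)

/-- every finite-dimensional Leibniz algebra of dimension `d ≥ 2` has
length at most `d`, i.e. every finite generating set has length at most `d`. -/
theorem leibniz_length_le_dim
    {F B : Type*} [Field F] [NonUnitalNonAssocRing B] [Module F B]
    [SMulCommClass F B B] [IsScalarTower F B B] [FiniteDimensional F B]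
    (hleibniz : ∀ x y z : B, (x * y) * z = x * (y * z) + (x * z) * y)
    (hdim : 2 ≤ finrank F B) :
    ∀ S : Set B, S.Finite → Generates F (amul B) S →
      lenSet F (amul B) S ≤ finrank F B :=
  fun _ _ hS => leibniz_length_le_dim_general hleibniz hS
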